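/- Let G be a finite simple graph with m edges whose edge set can be partitioned into α edge-disjoint forests (i.e., G has arboricity at most α). Then w(G) = Σ_{e=(u,v) ∈ E(G)} min(d(u), d(v)) ≤ 2mα. -/

import Mathlib

namespace EC

/-- The weight `w(e)` of an edge `e = (u,v)` of `G`: the minimum of the degrees of its two
endpoints. -/
def edgeWeight {V : Type*} [Fintype V] (G : SimpleGraph V) [DecidableRel G.Adj]
    (e : Sym2 V) : ℕ :=
  Sym2.lift ⟨fun u v => min (G.degree u) (G.degree v), fun _ _ => min_comm _ _⟩ e

lemma forest_head {V : Type*} (F : SimpleGraph V) (hF : F.IsAcyclic) :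
    ∃ c : Sym2 V → V, (∀ e ∈ F.edgeSet, c e ∈ e) ∧ Set.InjOn c F.edgeSet := by
  classical
  rcases isEmpty_or_nonempty V with hV | ⟨⟨r⟩⟩
  · refine ⟨fun e => e.out.1, fun e _ => e.out_fst_mem, fun e _ => ?_⟩
    exact (hV.false e.out.1).elim
  have : Nonempty V := ⟨r⟩
  obtain ⟨T, hFT, -, hT⟩ :=
    (SimpleGraph.connected_top (V := V)).exists_isTree_le_of_le_of_isAcyclic le_top hF
  have key : ∀ e : Sym2 V, ∃ v, e ∈ F.edgeSet →
      ∃ u, e = s(v, u) ∧ T.Adj v u ∧ T.dist v r = T.dist u r + 1 := by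
    intro e
    induction e with
    | _ x y =>
      by_cases hxy : F.Adj x y
      · have hT' : T.Adj x y := hFT hxy
        rcases hT.dist_eq_dist_add_one_of_adj r hT' with h | h
        · exact ⟨x, fun _ => ⟨y, rfl, hT', by simpa [SimpleGraph.dist_comm] using h⟩⟩
        · exact ⟨y, fun _ => ⟨x, Sym2.eq_swap, hT'.symm,
            by simpa [SimpleGraph.dist_comm] using h⟩⟩
      · exact ⟨x, fun h => (hxy h).elim⟩
  have uniq : ∀ v u u', T.Adj v u → T.Adj v u' → T.dist v r = T.dist u r + 1 →
      T.dist v r = T.dist u' r + 1 → u = u' := by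
    intro v u u' h h' hd hd'
    obtain ⟨p, hp⟩ := hT.connected.exists_walk_length_eq_dist u r
    obtain ⟨q, hq⟩ := hT.connected.exists_walk_length_eq_dist u' r
    have h1 := (SimpleGraph.Walk.cons h p).isPath_of_length_eq_dist (by simp [hp, hd])
    have h2 := (SimpleGraph.Walk.cons h' q).isPath_of_length_eq_dist (by simp [hq, hd'])
    have h3 := (hT.existsUnique_path v r).unique h1 h2
    simpa using congrArg SimpleGraph.Walk.snd h3
  choose c hc using key
  refine ⟨c, fun e he => ?_, fun e he e' he' hee => ?_⟩
  · obtain ⟨u, h, -⟩ := hc e he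
    have : c e ∈ s(c e, u) := Sym2.mem_mk_left _ _
    rwa [← h] at this
  · obtain ⟨u, h, ha, hd⟩ := hc e he
    obtain ⟨u', h', ha', hd'⟩ := hc e' he'
    rw [← hee] at h' ha' hd'
    rw [h, h', uniq _ _ _ ha ha' hd hd']

/-- If the edge set of a finite simple graph `G` with `m` edges can be partitioned into `α`
edge-disjoint forests (i.e. `G` has arboricity at most `α`), then
`w(G) = Σ_{e=(u,v)} min (d(u), d(v)) ≤ 2 m α`. -/
theorem weight_le_of_arboricity {V : Type*} [Fintype V] [DecidableEq V]
    (G : SimpleGraph V) [DecidableRel G.Adj]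
    (α : ℕ) (F : Fin α → SimpleGraph V)
    (hle : ∀ i, F i ≤ G)
    (hforest : ∀ i, (F i).IsAcyclic)
    (hpart : ∀ e ∈ G.edgeSet, ∃! i, e ∈ (F i).edgeSet) :
    ∑ e ∈ G.edgeFinset, edgeWeight G e ≤ 2 * G.edgeFinset.card * α := by
  classical
  choose c hc hinj using fun i => forest_head (F i) (hforest i)
  have hex : ∀ e : G.edgeSet, ∃ iv : Fin α × V,
      e.1 ∈ (F iv.1).edgeSet ∧ iv.2 = c iv.1 e.1 := by
    rintro ⟨e, he⟩
    obtain ⟨i, hi, -⟩ := hpart e he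
    exact ⟨(i, c i e), hi, rfl⟩
  choose g hg hg' using hex
  have ginj : Function.Injective g := by
    intro e e' h
    have h1 := hg e
    have h2 := hg' e
    have h3 := hg e'
    have h4 := hg' e'
    rw [h] at h1 h2
    exact Subtype.ext (hinj _ h1 h3 (h2.symm.trans h4))
  have hw : ∀ e : G.edgeSet, edgeWeight G e.1 ≤ G.degree (g e).2 := by
    intro e
    have hm : (g e).2 ∈ e.1 := by rw [hg' e]; exact hc _ _ (hg e)
    have aux : ∀ (e : Sym2 V) (v : V), v ∈ e → edgeWeight G e ≤ G.degree v := by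
      intro e v
      induction e with
      | _ x y =>
        intro hv
        rcases Sym2.mem_iff.1 hv with rfl | rfl
        · exact min_le_left _ _
        · exact min_le_right _ _
    exact aux _ _ hm
  calc ∑ e ∈ G.edgeFinset, edgeWeight G e
      = ∑ e : G.edgeSet, edgeWeight G e.1 :=
        Finset.sum_subtype _ (fun _ => SimpleGraph.mem_edgeFinset) _
    _ ≤ ∑ e : G.edgeSet, G.degree (g e).2 := Finset.sum_le_sum fun e _ => hw e
    _ = ∑ iv ∈ Finset.univ.image g, G.degree iv.2 :=
        by rw [Finset.sum_image (fun a _ b _ h => ginj h)]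
    _ ≤ ∑ iv : Fin α × V, G.degree iv.2 :=
        Finset.sum_le_sum_of_subset (Finset.subset_univ _)
    _ = 2 * G.edgeFinset.card * α := by
        rw [Fintype.sum_prod_type]
        simp [G.sum_degrees_eq_twice_card_edges, mul_comm]

end EC
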